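/- arXiv:1812.09762 — 5 statements merged into one kernel-verified Lean document; each statement's English description precedes it below -/
import Mathlib

section
/- Let p : ℕ → ℕ → ℕ be a sequence of sequences of natural numbers. Define T ⊆ List ℕ to consist of: every finite sequence all of whose entries equal 1; for each n, the sequence σ_n consisting of n+1 ones followed by a single 0; and, for each n and j, the sequence σ_n ++ [j] whenever p n j = 0 and p n i ≠ 0 for all i < j. Then T is a tree, and for every n, σ_n is a leaf of T if and only if p n j ≠ 0 for all j. -/
/-- A tree is a set of finite sequences of naturals closed under initial segments. -/
def IsTree (T : Set (List ℕ)) : Prop :=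
  ∀ σ ∈ T, ∀ τ : List ℕ, τ <+: σ → τ ∈ T

/-- A leaf of `T` is a sequence in `T` with no one-step extension in `T`. -/
def IsLeaf (T : Set (List ℕ)) (σ : List ℕ) : Prop :=
  σ ∈ T ∧ ∀ j : ℕ, σ ++ [j] ∉ T

theorem IsTree.union_of_concat {T S : Set (List ℕ)} (hT : IsTree T)
    (hS : ∀ (σ : List ℕ) (j : ℕ), σ ++ [j] ∈ S → σ ∈ T) : IsTree (T ∪ S) := by
  rintro σ (hσ | hσ) τ hτ
  · exact .inl (hT σ hσ τ hτ)
  · rcases σ.eq_nil_or_concat' with rfl | ⟨ρ, j, rfl⟩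
    · exact .inr (List.prefix_nil.1 hτ ▸ hσ)
    · rcases List.prefix_concat_iff.1 hτ with rfl | hρ
      · exact .inr hσ
      · exact .inl (hT ρ (hS ρ j hσ) τ hρ)

theorem isTree_setOf_forall_mem (P : ℕ → Prop) : IsTree {σ | ∀ x ∈ σ, P x} :=
  fun _ hσ _ hτ x hx => hσ x (hτ.subset hx)

theorem replicate_concat_prefix_iff {α : Type*} {a b : α} (hab : b ≠ a) {m n : ℕ} :
    List.replicate m a ++ [b] <+: List.replicate n a ++ [b] ↔ m = n := by
  refine ⟨fun h => ?_, fun h => h ▸ List.prefix_rfl⟩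
  rcases List.prefix_concat_iff.1 h with heq | hpre
  · simpa using congrArg List.length heq
  · have hb : b ∈ List.replicate n a := hpre.subset (by simp)
    exact absurd (List.eq_of_mem_replicate hb) hab

/-- The sequence `σ_n`: the node above which the tree records the first zero of `p n`. -/
def onesThenZero (n : ℕ) : List ℕ :=
  List.replicate (n + 1) 1 ++ [0]

theorem onesThenZero_prefix_iff {m n : ℕ} : onesThenZero m <+: onesThenZero n ↔ m = n :=
  (replicate_concat_prefix_iff zero_ne_one).trans Nat.succ_inj

/-- The tree `T` associated with the sequence of sequences `p`. Besides the branch of ones and the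
nodes `σ_n`, it has a child `σ_n ++ [j]` exactly when `j` is the first zero of `p n`. -/
def firstZeroTree (p : ℕ → ℕ → ℕ) : Set (List ℕ) :=
  {σ | ∀ x ∈ σ, x = 1} ∪ {σ | ∃ n, σ = onesThenZero n} ∪
    {σ | ∃ n j, p n j = 0 ∧ (∀ i < j, p n i ≠ 0) ∧ σ = onesThenZero n ++ [j]}

theorem isTree_firstZeroTree (p : ℕ → ℕ → ℕ) : IsTree (firstZeroTree p) := by
  refine ((isTree_setOf_forall_mem (· = 1)).union_of_concat ?_).union_of_concat ?_
  · rintro σ j ⟨n, hσ⟩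
    obtain ⟨rfl, -⟩ := List.append_singleton_inj.1 hσ
    exact fun _ hx => List.eq_of_mem_replicate hx
  · rintro σ j ⟨n, k, -, -, hσ⟩
    exact .inr ⟨n, (List.append_singleton_inj.1 hσ).1⟩

theorem onesThenZero_mem_firstZeroTree (p : ℕ → ℕ → ℕ) (n : ℕ) :
    onesThenZero n ∈ firstZeroTree p :=
  .inl (.inr ⟨n, rfl⟩)

/-- The `σ_n` are prefix-free, so `p m` with `m ≠ n` contributes nothing above `σ_n`. -/
theorem onesThenZero_concat_mem_firstZeroTree_iff {p : ℕ → ℕ → ℕ} {n j : ℕ} :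
    onesThenZero n ++ [j] ∈ firstZeroTree p ↔ p n j = 0 ∧ ∀ i < j, p n i ≠ 0 := by
  refine ⟨?_, fun ⟨hj, hlt⟩ => .inr ⟨n, j, hj, hlt, rfl⟩⟩
  rintro ((hones | ⟨m, hm⟩) | ⟨m, k, hk, hlt, hm⟩)
  · exact absurd (hones 0 (by simp [onesThenZero])) zero_ne_one
  · obtain rfl : n = m := onesThenZero_prefix_iff.1 ⟨[j], hm⟩
    simp at hm
  · obtain ⟨hnm, rfl⟩ := List.append_singleton_inj.1 hm
    obtain rfl : n = m := onesThenZero_prefix_iff.1 (hnm ▸ List.prefix_rfl)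
    exact ⟨hk, hlt⟩

theorem isLeaf_firstZeroTree_iff (p : ℕ → ℕ → ℕ) (n : ℕ) :
    IsLeaf (firstZeroTree p) (onesThenZero n) ↔ ∀ j, p n j ≠ 0 := by
  constructor
  · rintro ⟨-, hleaf⟩ j hj
    have hzero : ∃ j, p n j = 0 := ⟨j, hj⟩
    exact hleaf (Nat.find hzero) <| onesThenZero_concat_mem_firstZeroTree_iff.2
      ⟨Nat.find_spec hzero, fun _ => Nat.find_min hzero⟩
  · intro hne
    exact ⟨onesThenZero_mem_firstZeroTree p n,
      fun j hmem => hne j (onesThenZero_concat_mem_firstZeroTree_iff.1 hmem).1⟩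

theorem lpo_tree (p : ℕ → ℕ → ℕ) (T : Set (List ℕ))
    (hT : T = {σ : List ℕ | ∀ x ∈ σ, x = 1}
        ∪ {σ : List ℕ | ∃ n : ℕ, σ = List.replicate (n + 1) 1 ++ [0]}
        ∪ {σ : List ℕ | ∃ n j : ℕ, p n j = 0 ∧ (∀ i < j, p n i ≠ 0) ∧
            σ = (List.replicate (n + 1) 1 ++ [0]) ++ [j]}) :
    IsTree T ∧
      ∀ n : ℕ, IsLeaf T (List.replicate (n + 1) 1 ++ [0]) ↔ ∀ j : ℕ, p n j ≠ 0 := by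
  subst hT
  exact ⟨isTree_firstZeroTree p, isLeaf_firstZeroTree_iff p⟩
end

section
/- Let T ⊆ List ℕ be a tree and T* = T⁺ ∪ { σ ++ [0] | σ ∈ T⁺ } where T⁺ = { σ.map (· + 1) | σ ∈ T }. Then: (i) a function p : ℕ → ℕ is an infinite path of T if and only if the function n ↦ p n + 1 is an infinite path of T*; and (ii) every infinite path q of T* satisfies q n ≥ 1 for all n, and n ↦ q n - 1 is an infinite path of T. Consequently p ↦ (n ↦ p n + 1) is a bijection from the set of infinite paths of T onto the set of infinite paths of T*. -/
/-- An infinite path of `T`: every finite initial segment belongs to `T`. -/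
def IsPath (T : Set (List ℕ)) (p : ℕ → ℕ) : Prop :=
  ∀ n : ℕ, (List.ofFn fun i : Fin n => p i) ∈ T

/-!
Suppose `b` occurs in no member of `S`. Then no leaf `σ ++ [b]` lies on an infinite path: consider
the initial segment of the path one entry longer. If it is in `S`, then `b` does not occur in it;
otherwise it is itself a leaf, and what precedes its last entry is in `S`. So attaching leaves
creates no infinite paths, and what remains is an injective relabelling of the entries.
-/

section

variable {α β : Type*}

/-- The set of infinite paths of a set of finite sequences over an arbitrary alphabet. For `α = ℕ`,
membership is `IsPath` by definition. -/
def branches (T : Set (List α)) : Set (ℕ → α) :=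
  {p | ∀ n : ℕ, (List.ofFn fun i : Fin n => p i) ∈ T}

/-- The set `S` with a child labelled `b` attached to each of its members, so that `T*` is
`withLeaves 0 T⁺`. -/
def withLeaves (b : β) (S : Set (List β)) : Set (List β) :=
  S ∪ {l : List β | ∃ σ ∈ S, l = σ ++ [b]}

theorem branches_withLeaves {b : β} {S : Set (List β)} (hb : ∀ σ ∈ S, b ∉ σ) :
    branches (withLeaves b S) = branches S := by
  refine Set.Subset.antisymm (fun q hq n => ?_) fun q hq n => Or.inl (hq n)
  have segment_succ : (List.ofFn fun i : Fin (n + 1) => q i) =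
      (List.ofFn fun i : Fin n => q i) ++ [q n] := List.ofFn_succ_last
  rcases hq (n + 1) with hS | ⟨σ, hσ, hleaf⟩
  · have not_leaf : ¬∃ σ ∈ S, (List.ofFn fun i : Fin n => q i) = σ ++ [b] := by
      rintro ⟨σ, -, hleaf⟩
      refine hb _ hS ?_
      rw [segment_succ, hleaf]
      exact List.mem_append_left _ List.mem_concat_self
    exact (hq n).resolve_right not_leaf
  · have stem_eq : (List.ofFn fun i : Fin n => q i) = σ :=
      (List.append_inj' (segment_succ.symm.trans hleaf) rfl).1
    exact stem_eq ▸ hσ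

theorem comp_mem_branches_image_map_iff {f : α → β} (hf : f.Injective) {T : Set (List α)}
    {p : ℕ → α} : f ∘ p ∈ branches (List.map f '' T) ↔ p ∈ branches T := by
  refine forall_congr' fun n => ?_
  rw [← hf.list_map.mem_set_image, List.map_ofFn]
  rfl

theorem mem_range_of_mem_branches_image_map {f : α → β} {T : Set (List α)} {q : ℕ → β}
    (hq : q ∈ branches (List.map f '' T)) (n : ℕ) : q n ∈ Set.range f := by
  obtain ⟨σ, -, hσ⟩ := hq (n + 1)
  have hmem : q n ∈ σ.map f := hσ ▸ List.mem_ofFn.2 ⟨Fin.last n, rfl⟩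
  obtain ⟨a, -, ha⟩ := List.mem_map.1 hmem
  exact ⟨a, ha⟩

theorem branches_withLeaves_image_map {f : α → β} {b : β} (hb : b ∉ Set.range f)
    (T : Set (List α)) :
    branches (withLeaves b (List.map f '' T)) = branches (List.map f '' T) := by
  refine branches_withLeaves ?_
  rintro _ ⟨σ, -, rfl⟩ hmem
  obtain ⟨a, -, ha⟩ := List.mem_map.1 hmem
  exact hb ⟨a, ha⟩

theorem star_paths_general {f : α → β} {g : β → α} (hgf : Function.LeftInverse g f) {b : β}
    (hb : b ∉ Set.range f) (T : Set (List α)) :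
    (∀ p : ℕ → α, p ∈ branches T ↔ f ∘ p ∈ branches (withLeaves b (List.map f '' T))) ∧
    (∀ q ∈ branches (withLeaves b (List.map f '' T)),
      (∀ n : ℕ, q n ∈ Set.range f) ∧ g ∘ q ∈ branches T) ∧
    Set.BijOn (f ∘ ·) (branches T) (branches (withLeaves b (List.map f '' T))) := by
  rw [branches_withLeaves_image_map hb]
  have comp_mem_iff (p : ℕ → α) : f ∘ p ∈ branches (List.map f '' T) ↔ p ∈ branches T :=
    comp_mem_branches_image_map_iff hgf.injective
  have comp_comp_eq : ∀ q ∈ branches (List.map f '' T), f ∘ g ∘ q = q := fun q hq =>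
    funext fun n => hgf.rightInvOn_range (mem_range_of_mem_branches_image_map hq n)
  have comp_mem : ∀ q ∈ branches (List.map f '' T), g ∘ q ∈ branches T := fun q hq =>
    (comp_mem_iff _).1 ((comp_comp_eq q hq).symm ▸ hq)
  refine ⟨fun p => (comp_mem_iff p).symm,
    fun q hq => ⟨mem_range_of_mem_branches_image_map hq, comp_mem q hq⟩, ?_⟩
  have inv_on : Set.InvOn (g ∘ ·) (f ∘ ·) (branches T) (branches (List.map f '' T)) :=
    ⟨fun p _ => funext fun n => hgf (p n), comp_comp_eq⟩
  exact inv_on.bijOn (fun p hp => (comp_mem_iff p).2 hp) comp_mem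

end

theorem star_paths (T Tp Ts : Set (List ℕ)) (hT : IsTree T)
    (hTp : Tp = (List.map (· + 1)) '' T)
    (hTs : Ts = Tp ∪ {l : List ℕ | ∃ σ ∈ Tp, l = σ ++ [0]}) :
    (∀ p : ℕ → ℕ, IsPath T p ↔ IsPath Ts (fun n => p n + 1)) ∧
    (∀ q : ℕ → ℕ, IsPath Ts q → (∀ n : ℕ, 1 ≤ q n) ∧ IsPath T (fun n => q n - 1)) ∧
    Set.BijOn (fun p : ℕ → ℕ => fun n => p n + 1)
      {p : ℕ → ℕ | IsPath T p} {q : ℕ → ℕ | IsPath Ts q} := by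
  subst hTp hTs
  simpa only [Nat.range_succ] using!
    star_paths_general (f := Nat.succ) (g := Nat.pred) (b := 0) Nat.pred_succ (by simp) T
end

section
/- Let T ⊆ List ℕ be a tree and T* = T⁺ ∪ { σ ++ [0] | σ ∈ T⁺ } where T⁺ = { σ.map (· + 1) | σ ∈ T }. Then a set S ⊆ List ℕ is a perfect subtree of T if and only if S⁺ = { σ + 1 | σ ∈ S } is a perfect subtree of T*. -/
/-- Two sequences are incompatible if neither is a prefix of the other. -/
def Incomp (σ τ : List ℕ) : Prop :=
  ¬ σ <+: τ ∧ ¬ τ <+: σ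

/-- `S` is a perfect subtree of `T`: a subtree each of whose elements has
two incompatible extensions in `S`. -/
def IsPerfectSubtree (T S : Set (List ℕ)) : Prop :=
  IsTree S ∧ S ⊆ T ∧
    ∀ σ ∈ S, ∃ τ₁ ∈ S, ∃ τ₂ ∈ S, σ <+: τ₁ ∧ σ <+: τ₂ ∧ Incomp τ₁ τ₂

/-!
Relabelling letters along an injection preserves and reflects prefixes, hence incompatibility, being
a tree, and splitting; so `S⁺` is a perfect subtree of `T*` exactly when `S` is a perfect subtree of
`{σ | σ + 1 ∈ T*}`. The extra nodes `σ ++ [0]` contain the letter `0`, which never occurs in a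
sequence of successors, so the latter set is `T` itself.
-/

/-- Every member of `S` has two incompatible extensions in `S`: the splitting condition that makes
a tree perfect, independent of any ambient tree. -/
def HasIncompExtensions (S : Set (List ℕ)) : Prop :=
  ∀ σ ∈ S, ∃ τ₁ ∈ S, ∃ τ₂ ∈ S, σ <+: τ₁ ∧ σ <+: τ₂ ∧ Incomp τ₁ τ₂

section Relabelling

variable {f : ℕ → ℕ} {S T : Set (List ℕ)} {σ τ : List ℕ}

theorem incomp_map_iff (hf : Function.Injective f) :
    Incomp (σ.map f) (τ.map f) ↔ Incomp σ τ := by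
  simp only [Incomp, List.prefix_map_iff_of_injective hf]

theorem isTree_image_map_iff (hf : Function.Injective f) :
    IsTree (List.map f '' S) ↔ IsTree S := by
  constructor
  · intro hS σ hσ τ hτ
    exact hf.list_map.mem_set_image.mp (hS _ (Set.mem_image_of_mem _ hσ) _ (hτ.map f))
  · rintro hS _ ⟨σ, hσ, rfl⟩ τ hτ
    obtain ⟨ρ, hρ, rfl⟩ := List.prefix_map_iff.mp hτ
    exact Set.mem_image_of_mem _ (hS σ hσ ρ hρ)

theorem hasIncompExtensions_image_map_iff (hf : Function.Injective f) :
    HasIncompExtensions (List.map f '' S) ↔ HasIncompExtensions S := by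
  simp only [HasIncompExtensions, Set.forall_mem_image, Set.exists_mem_image,
    List.prefix_map_iff_of_injective hf, incomp_map_iff hf]

theorem isPerfectSubtree_image_map_iff (hf : Function.Injective f) :
    IsPerfectSubtree T (List.map f '' S) ↔ IsPerfectSubtree (List.map f ⁻¹' T) S :=
  and_congr (isTree_image_map_iff hf)
    (and_congr Set.image_subset_iff (hasIncompExtensions_image_map_iff hf))

end Relabelling

section AppendedLetter

variable {α β : Type*} {f : α → β} {b : β}

theorem map_ne_append_singleton (hb : b ∉ Set.range f) (σ : List α) (τ : List β) :
    σ.map f ≠ τ ++ [b] := by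
  intro h
  have hmem : b ∈ σ.map f := h ▸ List.mem_concat_self
  obtain ⟨a, -, ha⟩ := List.mem_map.mp hmem
  exact hb ⟨a, ha⟩

theorem preimage_map_image_union_append (hf : Function.Injective f) (hb : b ∉ Set.range f)
    (T : Set (List α)) (U : Set (List β)) :
    List.map f ⁻¹' (List.map f '' T ∪ {l | ∃ τ ∈ U, l = τ ++ [b]}) = T := by
  have appended_empty : List.map f ⁻¹' {l | ∃ τ ∈ U, l = τ ++ [b]} = ∅ :=
    Set.eq_empty_of_forall_notMem fun σ ⟨τ, _, h⟩ => map_ne_append_singleton hb σ τ h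
  rw [Set.preimage_union, Set.preimage_image_eq T hf.list_map, appended_empty, Set.union_empty]

end AppendedLetter

theorem star_perfect_subtrees_general {T Tp Ts : Set (List ℕ)}
    (hTp : Tp = (List.map (· + 1)) '' T)
    (hTs : Ts = Tp ∪ {l : List ℕ | ∃ σ ∈ Tp, l = σ ++ [0]}) (S : Set (List ℕ)) :
    IsPerfectSubtree T S ↔ IsPerfectSubtree Ts ((List.map (· + 1)) '' S) := by
  subst hTp hTs
  have succ_inj : Function.Injective (· + 1 : ℕ → ℕ) := add_left_injective 1
  have zero_notMem : 0 ∉ Set.range (· + 1 : ℕ → ℕ) := by simp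
  rw [isPerfectSubtree_image_map_iff succ_inj,
    preimage_map_image_union_append succ_inj zero_notMem]

theorem star_perfect_subtrees (T Tp Ts : Set (List ℕ)) (hT : IsTree T)
    (hTp : Tp = (List.map (· + 1)) '' T)
    (hTs : Ts = Tp ∪ {l : List ℕ | ∃ σ ∈ Tp, l = σ ++ [0]}) :
    ∀ S : Set (List ℕ),
      IsPerfectSubtree T S ↔ IsPerfectSubtree Ts ((List.map (· + 1)) '' S) :=
  star_perfect_subtrees_general hTp hTs
end

section
/- Let T ⊆ List ℕ be a tree and σ ∈ T. Then σ belongs to some perfect subtree of T if and only if there exists a function f : List Bool → List ℕ such that: f [] = σ; f s ∈ T for every s; whenever s is a prefix of t, f s is a prefix of f t; and for every s, the sequences f (s ++ [false]) and f (s ++ [true]) are incompatible extensions of f s (each properly extends f s and neither is a prefix of the other). -/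
/-!
A perfect subtree containing `σ` is unravelled into a copy of the full binary tree: choose two
incompatible extensions of every node and follow these choices from `σ` along a binary string.
Conversely, the initial segments of the values of such an embedding form a perfect subtree.
-/

section Splitting

variable {α β : Type*} {r : α → α → Prop}

/-- Trees for a relation `r`, where `r b a` plays the role of `b` being an initial segment of `a`:
sets containing every `r`-predecessor of each of their elements. -/
def IsDownClosed (r : α → α → Prop) (S : Set α) : Prop :=
  ∀ a ∈ S, ∀ b, r b a → b ∈ S

/-- The perfectness condition for a relation `r`, stated apart from closure under predecessors:
every element of `S` has two incomparable `r`-successors in `S`. -/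
def IsSplittingSet (r : α → α → Prop) (S : Set α) : Prop :=
  ∀ a ∈ S, ∃ b ∈ S, ∃ c ∈ S, r a b ∧ r a c ∧ IncompRel r b c

/-- Copies of the full binary tree inside `r`, nodes being binary strings and siblings going to
incomparable elements. Monotonicity is required only along one-step extensions; see
`rel_of_isPrefix_of_rel_append`. -/
structure IsSplittingScheme (r : α → α → Prop) (f : List Bool → α) : Prop where
  rel_append : ∀ s i, r (f s) (f (s ++ [i]))
  incompRel_append : ∀ s, IncompRel r (f (s ++ [false])) (f (s ++ [true]))

theorem rel_of_isPrefix_of_rel_append [IsPreorder α r] {f : List β → α}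
    (hf : ∀ s i, r (f s) (f (s ++ [i]))) {s t : List β} (hst : s <+: t) : r (f s) (f t) := by
  obtain ⟨u, rfl⟩ := hst
  induction u using List.reverseRecOn with
  | nil => simpa only [List.append_nil] using refl_of r (f s)
  | append_singleton u i ih =>
    rw [← List.append_assoc]
    exact trans_of r ih (hf (s ++ u) i)

theorem IsSplittingSet.exists_branching {S : Set α} (hS : IsSplittingSet r S) :
    ∃ p : S → Bool → S, ∀ x : S, (∀ i, r x (p x i)) ∧ IncompRel r (p x false : α) (p x true) := by
  have exists_pair (x : S) :
      ∃ q : Bool → S, (∀ i, r x (q i)) ∧ IncompRel r (q false : α) (q true) := by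
    obtain ⟨b, hb, c, hc, hxb, hxc, hbc⟩ := hS x x.2
    exact ⟨fun i ↦ cond i ⟨c, hc⟩ ⟨b, hb⟩, Bool.forall_bool.2 ⟨hxb, hxc⟩, hbc⟩
  exact Classical.axiom_of_choice exists_pair

theorem IsSplittingSet.exists_isSplittingScheme {S : Set α} (hS : IsSplittingSet r S) {a : α}
    (ha : a ∈ S) :
    ∃ f : List Bool → α, f [] = a ∧ (∀ s, f s ∈ S) ∧ IsSplittingScheme r f := by
  obtain ⟨p, hp⟩ := hS.exists_branching
  let node (s : List Bool) : S := s.foldl p ⟨a, ha⟩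
  have node_append (s : List Bool) (i : Bool) : node (s ++ [i]) = p (node s) i :=
    List.foldl_concat p ⟨a, ha⟩ i s
  refine ⟨fun s ↦ node s, rfl, fun s ↦ (node s).2, fun s i ↦ ?_, fun s ↦ ?_⟩
  · rw [node_append]
    exact (hp (node s)).1 i
  · rw [node_append, node_append]
    exact (hp (node s)).2

namespace IsSplittingScheme

variable {f : List Bool → α}

theorem append_ne (hf : IsSplittingScheme r f) (s : List Bool) (i : Bool) :
    f (s ++ [i]) ≠ f s := by
  intro h
  cases i
  · exact (hf.incompRel_append s).1 (h ▸ hf.rel_append s true)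
  · exact (hf.incompRel_append s).2 (h ▸ hf.rel_append s false)

theorem isSplittingSet_setOf_rel [IsPreorder α r] (hf : IsSplittingScheme r f) :
    IsSplittingSet r {a | ∃ s, r a (f s)} := by
  rintro a ⟨s, has⟩
  exact ⟨f (s ++ [false]), ⟨_, refl_of r _⟩, f (s ++ [true]), ⟨_, refl_of r _⟩,
    trans_of r has (hf.rel_append s false), trans_of r has (hf.rel_append s true),
    hf.incompRel_append s⟩

end IsSplittingScheme

theorem isDownClosed_setOf_rel {ι : Type*} [IsTrans α r] (f : ι → α) :
    IsDownClosed r {a | ∃ s, r a (f s)} :=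
  fun _ ⟨s, has⟩ _ hba ↦ ⟨s, trans_of r hba has⟩

theorem mem_perfect_subtree_iff_general [IsPreorder α r] {T : Set α} (hT : IsDownClosed r T)
    (a : α) :
    (∃ S : Set α, (IsDownClosed r S ∧ S ⊆ T ∧ IsSplittingSet r S) ∧ a ∈ S) ↔
      ∃ f : List Bool → α,
        f [] = a ∧
        (∀ s, f s ∈ T) ∧
        (∀ s t, s <+: t → r (f s) (f t)) ∧
        (∀ s,
          r (f s) (f (s ++ [false])) ∧ f (s ++ [false]) ≠ f s ∧
          r (f s) (f (s ++ [true])) ∧ f (s ++ [true]) ≠ f s ∧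
          IncompRel r (f (s ++ [false])) (f (s ++ [true]))) := by
  constructor
  · rintro ⟨S, ⟨-, hST, hS⟩, ha⟩
    obtain ⟨f, hfa, hfS, hf⟩ := hS.exists_isSplittingScheme ha
    refine ⟨f, hfa, fun s ↦ hST (hfS s),
      fun _ _ ↦ rel_of_isPrefix_of_rel_append hf.rel_append, fun s ↦ ?_⟩
    exact ⟨hf.rel_append s false, hf.append_ne s false, hf.rel_append s true, hf.append_ne s true,
      hf.incompRel_append s⟩
  · rintro ⟨f, rfl, hfT, hmono, hsplit⟩
    have hf : IsSplittingScheme r f :=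
      ⟨fun s i ↦ hmono _ _ (List.prefix_append s [i]), fun s ↦ (hsplit s).2.2.2.2⟩
    have hT' : {a | ∃ s, r a (f s)} ⊆ T := fun a ⟨s, has⟩ ↦ hT (f s) (hfT s) a has
    exact ⟨_, ⟨isDownClosed_setOf_rel f, hT', hf.isSplittingSet_setOf_rel⟩, [], refl_of r _⟩

end Splitting

theorem mem_perfect_subtree_iff (T : Set (List ℕ)) (hT : IsTree T)
    (σ : List ℕ) (hσ : σ ∈ T) :
    (∃ S : Set (List ℕ), IsPerfectSubtree T S ∧ σ ∈ S) ↔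
      ∃ f : List Bool → List ℕ,
        f [] = σ ∧
        (∀ s : List Bool, f s ∈ T) ∧
        (∀ s t : List Bool, s <+: t → f s <+: f t) ∧
        (∀ s : List Bool,
          f s <+: f (s ++ [false]) ∧ f (s ++ [false]) ≠ f s ∧
          f s <+: f (s ++ [true]) ∧ f (s ++ [true]) ≠ f s ∧
          Incomp (f (s ++ [false])) (f (s ++ [true]))) :=
  mem_perfect_subtree_iff_general (r := (· <+: ·)) hT σ
end

section
/- Fix k ≥ 2. Let H be a hypergraph with vertex set ℕ and edges given by a sequence e : ℕ → Set ℕ. Fix an injective coding c of finite subsets of ℕ into ℕ. Define T ⊆ List ℕ to consist of those sequences σ (of length m+1, say) such that for every i ≤ m: if i = 2j, then either σ.get i = c {u, v} for some two distinct vertices u, v ∈ e j, or σ.get i = c ∅ and e j does not contain two distinct vertices both belonging to {0, 1, …, m}; if i = 2j+1, then σ.get i < k (interpreted as a color for vertex j); and moreover for every j with 2j ≤ m, if σ.get (2j) = c {u, v} with u ≠ v and both 2u+1 ≤ m and 2v+1 ≤ m, then σ.get (2u+1) ≠ σ.get (2v+1). Then T is a tree, and H has a proper k-coloring if and only if T has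 an infinite path. -/
/-- `f` is a proper coloring of the hypergraph with vertex set `ℕ` and edges `e`:
every edge containing at least two vertices contains two vertices of different colors. -/
def IsProperColoring {k : ℕ} (e : ℕ → Set ℕ) (f : ℕ → Fin k) : Prop :=
  ∀ j : ℕ, (∃ u ∈ e j, ∃ v ∈ e j, u ≠ v) →
    ∃ u ∈ e j, ∃ v ∈ e j, u ≠ v ∧ f u ≠ f v

/-!
An edge of arbitrary cardinality has no coloring condition that can be checked at a finite stage, so
a path records, besides the colors, a witness for each edge: a pair of its vertices that must get
different colors, or a claim that the edge has at most one vertex. The first kind of entry is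
checked once both colors are known; a false claim of the second kind is refuted as soon as the
stage exceeds two vertices of the edge. Hence the paths are exactly the proper colorings together
with a choice of witnesses.
-/

/-- `x` labels the edge `s` at stage `n`, for a coding `c` of finite sets of vertices: either `x`
codes a pair of distinct vertices of `s`, or `x` codes `∅`, which stands for the guess that `s` has
at most one vertex, and no two vertices of `s` below `n` refute this guess. -/
def IsEdgeLabel {β : Type*} (c : Finset ℕ → β) (s : Set ℕ) (n : ℕ) (x : β) : Prop :=
  (∃ u v : ℕ, u ∈ s ∧ v ∈ s ∧ u ≠ v ∧ x = c {u, v}) ∨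
    (x = c ∅ ∧ ¬ ∃ u v : ℕ, u ∈ s ∧ v ∈ s ∧ u ≠ v ∧ u < n ∧ v < n)

/-- The tree of finite attempts at a proper `k`-coloring of the hypergraph `e`: entry `2 * j` is a
label of the edge `e j`, entry `2 * j + 1` is the color of the vertex `j`, and two vertices whose
pair is recorded as a label receive different colors. -/
def coloringTree (k : ℕ) (e : ℕ → Set ℕ) (c : Finset ℕ → ℕ) : Set (List ℕ) :=
  {σ | (∀ (j : ℕ) (hj : 2 * j < σ.length), IsEdgeLabel c (e j) σ.length σ[2 * j]) ∧
    (∀ (j : ℕ) (hj : 2 * j + 1 < σ.length), σ[2 * j + 1] < k) ∧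
    ∀ (j u v : ℕ) (hj : 2 * j < σ.length) (hu : 2 * u + 1 < σ.length)
      (hv : 2 * v + 1 < σ.length),
      u ≠ v → σ[2 * j] = c {u, v} → σ[2 * u + 1] ≠ σ[2 * v + 1]}

section EdgeLabel

variable {α β : Type*} {c : Finset ℕ → β} {s : Set ℕ} {x : β}

theorem IsEdgeLabel.anti {m n : ℕ} (hmn : m ≤ n) (h : IsEdgeLabel c s n x) :
    IsEdgeLabel c s m x :=
  h.imp_right fun ⟨hx, hs⟩ ↦ ⟨hx, fun ⟨u, v, hu, hv, huv, hum, hvm⟩ ↦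
    hs ⟨u, v, hu, hv, huv, hum.trans_le hmn, hvm.trans_le hmn⟩⟩

theorem forall_isEdgeLabel_iff :
    (∀ n, IsEdgeLabel c s n x) ↔
      (∃ u ∈ s, ∃ v ∈ s, u ≠ v ∧ x = c {u, v}) ∨ (x = c ∅ ∧ s.Subsingleton) := by
  constructor
  · intro h
    refine or_iff_not_imp_left.2 fun hpair ↦ ?_
    have hempty (n : ℕ) := (h n).resolve_left fun ⟨u, v, hu, hv, huv, hx⟩ ↦
      hpair ⟨u, hu, v, hv, huv, hx⟩
    refine ⟨(hempty 0).1, fun u hu v hv ↦ by_contra fun huv ↦ ?_⟩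
    exact (hempty (u + v + 1)).2 ⟨u, v, hu, hv, huv, by omega, by omega⟩
  · rintro (⟨u, hu, v, hv, huv, hx⟩ | ⟨hx, hs⟩) n
    · exact .inl ⟨u, v, hu, hv, huv, hx⟩
    · exact .inr ⟨hx, fun ⟨u, v, hu, hv, huv, _⟩ ↦ huv (hs hu hv)⟩

theorem exists_isEdgeLabel_separated_iff (hc : Function.Injective c) (f : ℕ → α) :
    (∃ x, (∀ n, IsEdgeLabel c s n x) ∧ ∀ u v, u ≠ v → x = c {u, v} → f u ≠ f v) ↔
      (s.Nontrivial → ∃ u ∈ s, ∃ v ∈ s, u ≠ v ∧ f u ≠ f v) := by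
  simp only [forall_isEdgeLabel_iff]
  constructor
  · rintro ⟨x, ⟨u, hu, v, hv, huv, hx⟩ | ⟨-, hs⟩, hsep⟩ hnontrivial
    · exact ⟨u, hu, v, hv, huv, hsep u v huv hx⟩
    · exact absurd hs hnontrivial.not_subsingleton
  · intro hs
    rcases s.subsingleton_or_nontrivial with hsub | hnontrivial
    · refine ⟨c ∅, .inr ⟨rfl, hsub⟩, fun u v _ hcuv ↦ ?_⟩
      exact absurd (hc hcuv).symm (Finset.insert_ne_empty u {v})
    · obtain ⟨u, hu, v, hv, huv, hfuv⟩ := hs hnontrivial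
      refine ⟨c {u, v}, .inl ⟨u, hu, v, hv, huv, rfl⟩, fun a b _ hcab ↦ ?_⟩
      have hpair : ({u, v} : Set ℕ) = {a, b} := by
        simpa only [Finset.coe_pair] using congrArg ((↑) : Finset ℕ → Set ℕ) (hc hcab)
      rcases Set.pair_eq_pair_iff.1 hpair with ⟨rfl, rfl⟩ | ⟨rfl, rfl⟩
      exacts [hfuv, hfuv.symm]

theorem isProperColoring_iff_exists_isEdgeLabel {k : ℕ} {e : ℕ → Set ℕ}
    (hc : Function.Injective c) (f : ℕ → Fin k) :
    IsProperColoring e f ↔ ∃ q : ℕ → β, ∀ j, (∀ n, IsEdgeLabel c (e j) n (q j)) ∧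
      ∀ u v, u ≠ v → q j = c {u, v} → f u ≠ f v :=
  (forall_congr' fun _ ↦ (exists_isEdgeLabel_separated_iff hc f).symm).trans Classical.skolem

end EdgeLabel

theorem exists_interleaving {α : Type*} (q a : ℕ → α) :
    ∃ p : ℕ → α, (∀ j, p (2 * j) = q j) ∧ ∀ j, p (2 * j + 1) = a j := by
  refine ⟨fun n ↦ if Even n then q (n / 2) else a (n / 2), fun j ↦ ?_, fun j ↦ ?_⟩
  · simp
  · simp [Nat.mul_add_div]

section ColoringTree

variable {k : ℕ} {e : ℕ → Set ℕ} {c : Finset ℕ → ℕ}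

theorem isTree_coloringTree : IsTree (coloringTree k e c) := by
  rintro σ ⟨hlabel, hcolor, hsep⟩ τ hτ
  have hlen {i : ℕ} (hi : i < τ.length) : i < σ.length := hi.trans_le hτ.length_le
  refine ⟨fun j hj ↦ ?_, fun j hj ↦ ?_, fun j u v hj hu hv huv ↦ ?_⟩
  · simpa only [hτ.getElem] using (hlabel j (hlen hj)).anti hτ.length_le
  · simpa only [hτ.getElem] using hcolor j (hlen hj)
  · simpa only [hτ.getElem] using hsep j u v (hlen hj) (hlen hu) (hlen hv) huv

theorem isPath_coloringTree_iff {p : ℕ → ℕ} :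
    IsPath (coloringTree k e c) p ↔
      (∀ j n, IsEdgeLabel c (e j) n (p (2 * j))) ∧ (∀ j, p (2 * j + 1) < k) ∧
        ∀ j u v, u ≠ v → p (2 * j) = c {u, v} → p (2 * u + 1) ≠ p (2 * v + 1) := by
  simp only [IsPath, coloringTree, Set.mem_ofPred_eq, List.length_ofFn, List.getElem_ofFn]
  constructor
  · intro h
    refine ⟨fun j n ↦ ?_, fun j ↦ ?_, fun j u v ↦ ?_⟩
    · exact ((h (2 * j + n + 1)).1 j (by omega)).anti (by omega)
    · exact (h (2 * j + 2)).2.1 j (by omega)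
    · exact (h (2 * (j + u + v) + 2)).2.2 j u v (by omega) (by omega) (by omega)
  · rintro ⟨hlabel, hcolor, hsep⟩ n
    exact ⟨fun j _ ↦ hlabel j n, fun j _ ↦ hcolor j, fun j u v _ _ _ ↦ hsep j u v⟩

theorem exists_isPath_coloringTree_iff :
    (∃ p, IsPath (coloringTree k e c) p) ↔
      ∃ (f : ℕ → Fin k) (q : ℕ → ℕ), ∀ j, (∀ n, IsEdgeLabel c (e j) n (q j)) ∧
        ∀ u v, u ≠ v → q j = c {u, v} → f u ≠ f v := by
  simp only [isPath_coloringTree_iff]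
  constructor
  · rintro ⟨p, hlabel, hcolor, hsep⟩
    refine ⟨fun j ↦ ⟨p (2 * j + 1), hcolor j⟩, fun j ↦ p (2 * j), fun j ↦ ⟨hlabel j, ?_⟩⟩
    simpa only [ne_eq, Fin.mk.injEq] using hsep j
  · rintro ⟨f, q, hq⟩
    obtain ⟨p, hpq, hpf⟩ := exists_interleaving q fun j ↦ (f j : ℕ)
    refine ⟨p, ?_⟩
    simp only [hpq, hpf]
    exact ⟨fun j ↦ (hq j).1, fun j ↦ (f j).isLt, fun j u v huv hx ↦
      Fin.val_ne_of_ne ((hq j).2 u v huv hx)⟩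

end ColoringTree

theorem hpc_tree (k : ℕ) (hk : 2 ≤ k) (e : ℕ → Set ℕ)
    (c : Finset ℕ → ℕ) (hc : Function.Injective c)
    (T : Set (List ℕ))
    (hT : T = {σ : List ℕ |
      (∀ j : ℕ, ∀ hj : 2 * j < σ.length,
        (∃ u v : ℕ, u ∈ e j ∧ v ∈ e j ∧ u ≠ v ∧ σ.get ⟨2 * j, hj⟩ = c {u, v}) ∨
        (σ.get ⟨2 * j, hj⟩ = c (∅ : Finset ℕ) ∧
          ¬ ∃ u v : ℕ, u ∈ e j ∧ v ∈ e j ∧ u ≠ v ∧ u < σ.length ∧ v < σ.length)) ∧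
      (∀ j : ℕ, ∀ hj : 2 * j + 1 < σ.length, σ.get ⟨2 * j + 1, hj⟩ < k) ∧
      (∀ j u v : ℕ, ∀ hj : 2 * j < σ.length,
        ∀ hu : 2 * u + 1 < σ.length, ∀ hv : 2 * v + 1 < σ.length,
        u ≠ v → σ.get ⟨2 * j, hj⟩ = c {u, v} →
        σ.get ⟨2 * u + 1, hu⟩ ≠ σ.get ⟨2 * v + 1, hv⟩)}) :
    IsTree T ∧
      ((∃ f : ℕ → Fin k, IsProperColoring e f) ↔ ∃ p : ℕ → ℕ, IsPath T p) := by
  obtain rfl : T = coloringTree k e c := hT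
  refine ⟨isTree_coloringTree, ?_⟩
  simp only [exists_isPath_coloringTree_iff, isProperColoring_iff_exists_isEdgeLabel hc]
end
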